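/- Let v and u be real-valued functions in L¹([−π,π]) ∩ L²([−π,π]) with Fourier coefficients {v_j} and {u_j}. Suppose |v(ω)| ≤ M₁ < ∞ and v(ω) ≥ m > 0 for almost every ω, and Σ_{j=−∞}^{∞} |j| |u_j|² ≤ M₂ < ∞. Then for every n ≥ 1, ‖T_n(v)^{−1} T_n(vu) − T_n(u)‖_F² ≤ 4 m^{−2} M₁² M₂. -/

import Mathlib

open MeasureTheory

/-- The `j`-th Fourier coefficient `v_j = (1/(2π)) ∫_{−π}^{π} v(ω) e^{−iωj} dω` of an
integrable function `v` on `[−π, π]`. -/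
noncomputable def fCoef (v : ℝ → ℝ) (j : ℤ) : ℂ :=
  (((2 * Real.pi)⁻¹ : ℝ) : ℂ) *
    ∫ ω in Set.Icc (-Real.pi) Real.pi, (v ω : ℂ) * Complex.exp (-(Complex.I * ω * j))

/-- The `n×n` Toeplitz matrix `T_n(v)` with entries `[T_n(v)]_{jk} = v_{j−k}`. -/
noncomputable def Toep (n : ℕ) (v : ℝ → ℝ) : Matrix (Fin n) (Fin n) ℂ :=
  Matrix.of fun j k : Fin n => fCoef v ((j : ℤ) - (k : ℤ))

/-- The complex exponential `e^{iωj}`. -/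
noncomputable def eFun (j : ℤ) (ω : ℝ) : ℂ := Complex.exp (Complex.I * ω * j)

/-- The trigonometric polynomial with coefficients `c`. -/
noncomputable def qFun {n : ℕ} (c : Fin n → ℂ) (ω : ℝ) : ℂ := ∑ l : Fin n, c l * eFun (l : ℤ) ω

/-- Lebesgue measure on the interval. -/
noncomputable abbrev muI : Measure ℝ := volume.restrict (Set.Icc (-Real.pi) Real.pi)

lemma eFun_cont (j : ℤ) : Continuous (eFun j) := by
  unfold eFun; fun_prop

lemma qFun_cont {n : ℕ} (c : Fin n → ℂ) : Continuous (qFun c) := by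
  unfold qFun
  exact continuous_finsetSum _ fun l _ => continuous_const.mul (eFun_cont _)

lemma eFun_norm (j : ℤ) (ω : ℝ) : ‖eFun j ω‖ = 1 := by
  unfold eFun
  have : Complex.I * ω * j = ((ω * j : ℝ) : ℂ) * Complex.I := by push_cast; ring
  rw [this, Complex.norm_exp_ofReal_mul_I]

lemma eFun_conj (j : ℤ) (ω : ℝ) :
    (starRingEnd ℂ) (eFun j ω) = Complex.exp (-(Complex.I * ω * j)) := by
  unfold eFun
  rw [← Complex.exp_conj]
  simp

lemma int_mul_cont {w : ℝ → ℝ} (hw : Integrable w muI) {h : ℝ → ℂ} (hh : Continuous h) :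
    Integrable (fun ω => (w ω : ℂ) * h ω) muI :=
  IntegrableOn.mul_continuousOn (hw.ofReal (𝕜 := ℂ)) hh.continuousOn isCompact_Icc

lemma cont_int {h : ℝ → ℝ} (hh : Continuous h) : Integrable h muI :=
  hh.continuousOn.integrableOn_compact isCompact_Icc

lemma fCoef_sub (w : ℝ → ℝ) (j k : ℤ) :
    fCoef w (j - k) = (((2 * Real.pi)⁻¹ : ℝ) : ℂ) *
      ∫ ω, (w ω : ℂ) * (eFun k ω * (starRingEnd ℂ) (eFun j ω)) ∂muI := by
  unfold fCoef
  congr 2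
  ext ω
  rw [eFun_conj, eFun, ← Complex.exp_add]
  congr 2
  push_cast
  ring

lemma sum_conj_fCoef {n : ℕ} {w : ℝ → ℝ} (hw : Integrable w muI) (c : Fin n → ℂ) (k : ℤ) :
    ∑ j : Fin n, (starRingEnd ℂ) (c j) * fCoef w ((j : ℤ) - k) =
      (((2 * Real.pi)⁻¹ : ℝ) : ℂ) *
        ∫ ω, (w ω : ℂ) * (eFun k ω * (starRingEnd ℂ) (qFun c ω)) ∂muI := by
  have h1 : ∀ ω, (w ω : ℂ) * (eFun k ω * (starRingEnd ℂ) (qFun c ω)) =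
      ∑ j : Fin n, (starRingEnd ℂ) (c j) *
        ((w ω : ℂ) * (eFun k ω * (starRingEnd ℂ) (eFun (j : ℤ) ω))) := by
    intro ω
    simp only [qFun, map_sum, map_mul, Finset.mul_sum]
    exact Finset.sum_congr rfl fun _ _ => by ring
  simp_rw [h1]
  rw [integral_finsetSum]
  · rw [Finset.mul_sum]
    refine Finset.sum_congr rfl fun j _ => ?_
    rw [fCoef_sub, integral_const_mul]
    ring
  · intro j _
    refine Integrable.const_mul (int_mul_cont hw ?_) _
    exact (eFun_cont k).mul (Complex.continuous_conj.comp (eFun_cont _))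

lemma sum_conj_Toep {n : ℕ} {w : ℝ → ℝ} (hw : Integrable w muI) (c d : Fin n → ℂ) :
    ∑ j : Fin n, (starRingEnd ℂ) (c j) * ((Toep n w).mulVec d) j =
      (((2 * Real.pi)⁻¹ : ℝ) : ℂ) *
        ∫ ω, (w ω : ℂ) * (qFun d ω * (starRingEnd ℂ) (qFun c ω)) ∂muI := by
  have h1 : ∀ ω, (w ω : ℂ) * (qFun d ω * (starRingEnd ℂ) (qFun c ω)) =
      ∑ k : Fin n, d k *
        ((w ω : ℂ) * (eFun (k : ℤ) ω * (starRingEnd ℂ) (qFun c ω))) := by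
    intro ω
    rw [qFun, Finset.sum_mul, Finset.mul_sum]
    exact Finset.sum_congr rfl fun _ _ => by ring
  simp_rw [h1]
  rw [integral_finsetSum]
  · simp_rw [integral_const_mul]
    rw [Finset.mul_sum]
    simp only [Matrix.mulVec, dotProduct, Finset.mul_sum]
    rw [Finset.sum_comm]
    refine Finset.sum_congr rfl fun k _ => ?_
    rw [mul_left_comm, ← sum_conj_fCoef hw c k, Finset.mul_sum]
    refine Finset.sum_congr rfl fun j _ => ?_
    simp only [Toep, Matrix.of_apply]
    ring
  · intro j _
    refine Integrable.const_mul (int_mul_cont hw ?_) _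
    exact (eFun_cont _).mul (Complex.continuous_conj.comp (qFun_cont _))

lemma fCoef_eq (w : ℝ → ℝ) (j : ℤ) :
    fCoef w j = fourierCoeffOn (a := -Real.pi) (b := Real.pi)
      (by linarith [Real.pi_pos]) (fun ω => (w ω : ℂ)) j := by
  rw [fourierCoeffOn_eq_integral, fCoef, intervalIntegral.integral_of_le (by linarith [Real.pi_pos]),
    integral_Icc_eq_integral_Ioc, Complex.real_smul]
  congr 1
  · congr 1
    rw [one_div]; congr 1; ring
  · congr 1
    ext ω
    rw [smul_eq_mul, mul_comm, fourier_coe_apply]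
    congr 2
    have : (Real.pi : ℂ) ≠ 0 := by exact_mod_cast Real.pi_ne_zero
    push_cast
    field_simp
    ring

lemma parseval {u : ℝ → ℝ} (hu1 : Integrable u muI) (hu2 : Integrable (fun ω => (u ω) ^ 2) muI) :
    HasSum (fun j : ℤ => ‖fCoef u j‖ ^ 2) ((2 * Real.pi)⁻¹ * ∫ ω, (u ω) ^ 2 ∂muI) := by
  have hab : -Real.pi < Real.pi := by linarith [Real.pi_pos]
  have h2 : MemLp (fun ω => (u ω : ℂ)) 2 (volume.restrict (Set.Ioc (-Real.pi) Real.pi)) := by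
    have hle : volume.restrict (Set.Ioc (-Real.pi) Real.pi) ≤ muI :=
      Measure.restrict_mono Set.Ioc_subset_Icc_self le_rfl
    have : MemLp u 2 muI := (memLp_two_iff_integrable_sq hu1.aestronglyMeasurable).2 hu2
    exact (this.mono_measure hle).ofReal
  have := hasSum_sq_fourierCoeffOn hab h2
  simp_rw [fCoef_eq]
  convert this using 1
  rw [intervalIntegral.integral_of_le hab.le, smul_eq_mul, integral_Icc_eq_integral_Ioc]
  congr 1
  · congr 1; ring
  · simp

lemma fCoef_one (j : ℤ) : fCoef (fun _ => 1) j = if j = 0 then 1 else 0 := by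
  have hpi : (Real.pi : ℂ) ≠ 0 := by exact_mod_cast Real.pi_ne_zero
  split_ifs with h
  · subst h
    have h0 := Real.pi_pos
    simp [fCoef, Measure.real]
    rw [ENNReal.toReal_ofReal (by linarith)]
    push_cast
    field_simp
    ring
  · unfold fCoef
    rw [integral_Icc_eq_integral_Ioc,
      ← intervalIntegral.integral_of_le (by linarith [Real.pi_pos] : -Real.pi ≤ Real.pi)]
    have hc : (-(Complex.I * j)) ≠ 0 := by simp [h]
    have h1 : ∀ ω : ℝ, ((1 : ℝ) : ℂ) * Complex.exp (-(Complex.I * ω * j)) =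
        Complex.exp ((-(Complex.I * j)) * ω) := by
      intro ω; rw [Complex.ofReal_one, one_mul]; congr 1; ring
    simp_rw [h1]
    rw [integral_exp_mul_complex hc]
    have h2 : Complex.exp (-(Complex.I * j) * (Real.pi : ℝ)) =
        Complex.exp (-(Complex.I * j) * ((-Real.pi : ℝ) : ℂ)) := by
      rw [Complex.exp_eq_exp_iff_exists_int]
      refine ⟨-j, ?_⟩
      push_cast
      ring
    rw [h2]
    simp

lemma norm_q {n : ℕ} (c : Fin n → ℂ) :
    ∑ j : Fin n, ‖c j‖ ^ 2 = (2 * Real.pi)⁻¹ * ∫ ω, ‖qFun c ω‖ ^ 2 ∂muI := by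
  have h := sum_conj_Toep (w := fun _ => 1) (cont_int continuous_const) c c
  have hT : Toep n (fun _ => 1) = 1 := by
    ext i j
    simp only [Toep, Matrix.of_apply, fCoef_one, Matrix.one_apply]
    congr 1
    rw [sub_eq_zero, Nat.cast_inj, Fin.val_inj]
  rw [hT, Matrix.one_mulVec] at h
  simp only [Complex.ofReal_one, one_mul, Complex.mul_conj', Complex.conj_mul'] at h
  have h3 : ∫ ω, (‖qFun c ω‖ : ℂ) ^ 2 ∂muI = ((∫ ω, ‖qFun c ω‖ ^ 2 ∂muI : ℝ) : ℂ) := by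
    rw [← integral_complex_ofReal]; push_cast; rfl
  rw [h3] at h
  exact_mod_cast h

lemma re_int {f : ℝ → ℂ} (hf : Integrable f muI) :
    ((((2 * Real.pi)⁻¹ : ℝ) : ℂ) * ∫ ω, f ω ∂muI).re = (2 * Real.pi)⁻¹ * ∫ ω, (f ω).re ∂muI := by
  rw [Complex.re_ofReal_mul]
  congr 1
  exact (integral_re hf).symm

lemma lower_form {n : ℕ} {v : ℝ → ℝ} {m : ℝ} (hv : Integrable v muI)
    (hlow : ∀ᵐ ω ∂muI, m ≤ v ω) (c : Fin n → ℂ) :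
    m * ∑ j : Fin n, ‖c j‖ ^ 2 ≤
      (∑ j : Fin n, (starRingEnd ℂ) (c j) * ((Toep n v).mulVec c) j).re := by
  have hi : Integrable (fun ω => (v ω : ℂ) * (qFun c ω * (starRingEnd ℂ) (qFun c ω))) muI :=
    int_mul_cont hv ((qFun_cont c).mul (Complex.continuous_conj.comp (qFun_cont c)))
  rw [sum_conj_Toep hv, re_int hi, norm_q, mul_left_comm]
  have hp := Real.pi_pos
  refine mul_le_mul_of_nonneg_left ?_ (by positivity)
  rw [← integral_const_mul]
  refine integral_mono_ae ?_ hi.re ?_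
  · exact (cont_int ((qFun_cont c).norm.pow 2)).const_mul m
  · filter_upwards [hlow] with ω h
    rw [Complex.mul_conj', Complex.re_ofReal_mul]
    have : ((‖qFun c ω‖ : ℂ) ^ 2).re = ‖qFun c ω‖ ^ 2 := by
      rw [← Complex.ofReal_pow, Complex.ofReal_re]
    rw [this]
    exact mul_le_mul_of_nonneg_right h (by positivity)

lemma Toep_unit {n : ℕ} {v : ℝ → ℝ} {m : ℝ} (hm : 0 < m) (hv : Integrable v muI)
    (hlow : ∀ᵐ ω ∂muI, m ≤ v ω) : IsUnit (Toep n v).det := by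
  rw [isUnit_iff_ne_zero]
  intro h0
  obtain ⟨c, hc, h⟩ := Matrix.exists_mulVec_eq_zero_iff.2 h0
  have h1 := lower_form hv hlow c
  rw [h] at h1
  simp only [Pi.zero_apply, mul_zero, Finset.sum_const_zero, Complex.zero_re] at h1
  apply hc
  have h2 : ∑ j : Fin n, ‖c j‖ ^ 2 = 0 :=
    le_antisymm (by by_contra hh; push Not at hh; nlinarith [mul_pos hm hh])
      (Finset.sum_nonneg fun _ _ => by positivity)
  rw [Finset.sum_eq_zero_iff_of_nonneg (fun _ _ => by positivity)] at h2
  ext j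
  simpa using h2 j (Finset.mem_univ j)

/-- The residual `u e_k - P_n (u e_k)`. -/
noncomputable def gFun (n : ℕ) (u : ℝ → ℝ) (k : ℤ) (ω : ℝ) : ℂ :=
  (u ω : ℂ) * eFun k ω - qFun (fun l : Fin n => fCoef u ((l : ℤ) - k)) ω

lemma gFun_sq (n : ℕ) (u : ℝ → ℝ) (k : ℤ) (ω : ℝ) :
    ‖gFun n u k ω‖ ^ 2 = (u ω) ^ 2 + ‖qFun (fun l : Fin n => fCoef u ((l : ℤ) - k)) ω‖ ^ 2 -
      2 * ((u ω : ℂ) * (eFun k ω *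
        (starRingEnd ℂ) (qFun (fun l : Fin n => fCoef u ((l : ℤ) - k)) ω))).re := by
  rw [gFun, ← Complex.normSq_eq_norm_sq, Complex.normSq_sub, Complex.normSq_eq_norm_sq,
    Complex.normSq_eq_norm_sq, norm_mul, eFun_norm, mul_one, Complex.norm_real, mul_assoc]
  simp

lemma gFun_int (n : ℕ) {u : ℝ → ℝ} (hu1 : Integrable u muI)
    (hu2 : Integrable (fun ω => (u ω) ^ 2) muI) (k : ℤ) :
    Integrable (fun ω => ‖gFun n u k ω‖ ^ 2) muI ∧
    (2 * Real.pi)⁻¹ * ∫ ω, ‖gFun n u k ω‖ ^ 2 ∂muI =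
      (2 * Real.pi)⁻¹ * ∫ ω, (u ω) ^ 2 ∂muI - ∑ l : Fin n, ‖fCoef u ((l : ℤ) - k)‖ ^ 2 := by
  set b : Fin n → ℂ := fun l : Fin n => fCoef u ((l : ℤ) - k) with hb
  have hi : Integrable (fun ω => (u ω : ℂ) * (eFun k ω * (starRingEnd ℂ) (qFun b ω))) muI :=
    int_mul_cont hu1 ((eFun_cont k).mul (Complex.continuous_conj.comp (qFun_cont b)))
  have hq : Integrable (fun ω => ‖qFun b ω‖ ^ 2) muI := cont_int ((qFun_cont b).norm.pow 2)
  have hr : Integrable (fun ω =>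
      2 * ((u ω : ℂ) * (eFun k ω * (starRingEnd ℂ) (qFun b ω))).re) muI := hi.re.const_mul 2
  have huq : Integrable (fun ω => (u ω) ^ 2 + ‖qFun b ω‖ ^ 2) muI := hu2.add hq
  simp_rw [gFun_sq, ← hb]
  refine ⟨huq.sub hr, ?_⟩
  rw [integral_sub huq hr, integral_add hu2 hq, integral_const_mul]
  have h1 := norm_q b
  have h2 := congrArg Complex.re (sum_conj_fCoef hu1 b k)
  rw [re_int hi] at h2
  have h3 : (∑ j : Fin n, (starRingEnd ℂ) (b j) * fCoef u ((j : ℤ) - k)).re =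
      ∑ j : Fin n, ‖b j‖ ^ 2 := by
    rw [Complex.re_sum]
    refine Finset.sum_congr rfl fun j _ => ?_
    change ((starRingEnd ℂ) (b j) * b j).re = _
    rw [Complex.conj_mul', ← Complex.ofReal_pow, Complex.ofReal_re]
  rw [h3] at h2
  linear_combination 2 * h2 - h1

lemma column_bound {n : ℕ} {v u : ℝ → ℝ} {M₁ m : ℝ} (hm : 0 < m)
    (hv1 : Integrable v muI) (hu1 : Integrable u muI)
    (hu2 : Integrable (fun ω => (u ω) ^ 2) muI)
    (hM1 : ∀ᵐ ω ∂muI, |v ω| ≤ M₁) (hlow : ∀ᵐ ω ∂muI, m ≤ v ω) (k : ℤ) (c : Fin n → ℂ)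
    (hc : ∀ j : Fin n, ((Toep n v).mulVec c) j = fCoef (fun ω => v ω * u ω) ((j : ℤ) - k) -
      ((Toep n v).mulVec (fun l : Fin n => fCoef u ((l : ℤ) - k))) j) :
    m ^ 2 * ∑ j : Fin n, ‖c j‖ ^ 2 ≤
      M₁ ^ 2 * ((2 * Real.pi)⁻¹ * ∫ ω, ‖gFun n u k ω‖ ^ 2 ∂muI) := by
  have hp := Real.pi_pos
  have hlo := lower_form hv1 hlow c
  set b : Fin n → ℂ := fun l : Fin n => fCoef u ((l : ℤ) - k) with hb
  have hvu : Integrable (fun ω => v ω * u ω) muI :=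
    hu1.bdd_mul hv1.aestronglyMeasurable (c := M₁) (by simpa using hM1)
  have hcc : Continuous fun ω => (starRingEnd ℂ) (qFun c ω) :=
    Complex.continuous_conj.comp (qFun_cont c)
  have hi1 : Integrable (fun ω => ((v ω * u ω : ℝ) : ℂ) *
      (eFun k ω * (starRingEnd ℂ) (qFun c ω))) muI := int_mul_cont hvu ((eFun_cont k).mul hcc)
  have hi2 : Integrable (fun ω => (v ω : ℂ) *
      (qFun b ω * (starRingEnd ℂ) (qFun c ω))) muI := int_mul_cont hv1 ((qFun_cont b).mul hcc)
  have hi3 : Integrable (fun ω => (v ω : ℂ) * (gFun n u k ω * (starRingEnd ℂ) (qFun c ω))) muI := by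
    refine (hi1.sub hi2).congr (Filter.Eventually.of_forall fun ω => ?_)
    simp only [Pi.sub_apply, gFun, Complex.ofReal_mul, hb]
    ring
  have hform : ∑ j : Fin n, (starRingEnd ℂ) (c j) * ((Toep n v).mulVec c) j =
      (((2 * Real.pi)⁻¹ : ℝ) : ℂ) *
        ∫ ω, (v ω : ℂ) * (gFun n u k ω * (starRingEnd ℂ) (qFun c ω)) ∂muI := by
    simp_rw [hc, mul_sub]
    rw [Finset.sum_sub_distrib, sum_conj_fCoef hvu, sum_conj_Toep hv1, ← mul_sub,
      ← integral_sub hi1 hi2]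
    congr 2
    ext ω
    simp only [gFun, Complex.ofReal_mul, hb]
    ring
  rw [hform, re_int hi3] at hlo
  have hq : Integrable (fun ω => ‖qFun c ω‖ ^ 2) muI := cont_int ((qFun_cont c).norm.pow 2)
  obtain ⟨hg, -⟩ := gFun_int n hu1 hu2 k
  have hub : ∫ ω, ((v ω : ℂ) * (gFun n u k ω * (starRingEnd ℂ) (qFun c ω))).re ∂muI ≤
      ∫ ω, (m / 2 * ‖qFun c ω‖ ^ 2 + M₁ ^ 2 / (2 * m) * ‖gFun n u k ω‖ ^ 2) ∂muI := by
    refine integral_mono_ae hi3.re ((hq.const_mul _).add (hg.const_mul _)) ?_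
    filter_upwards [hM1] with ω h
    refine (Complex.re_le_norm _).trans ?_
    rw [norm_mul, norm_mul, Complex.norm_real, RCLike.norm_conj, Real.norm_eq_abs]
    set a := ‖gFun n u k ω‖
    set d := ‖qFun c ω‖
    have ha : 0 ≤ a := norm_nonneg _
    have hd : 0 ≤ d := norm_nonneg _
    have h1 : |v ω| * (a * d) ≤ M₁ * (a * d) := mul_le_mul_of_nonneg_right h (by positivity)
    have h2 : m / 2 * d ^ 2 + M₁ ^ 2 / (2 * m) * a ^ 2 - M₁ * (a * d) =
        (m * d - M₁ * a) ^ 2 / (2 * m) := by field_simp; ring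
    have h3 : 0 ≤ (m * d - M₁ * a) ^ 2 / (2 * m) := by positivity
    linarith
  rw [integral_add (hq.const_mul _) (hg.const_mul _), integral_const_mul, integral_const_mul] at hub
  have h5 := mul_le_mul_of_nonneg_left hub (by positivity : 0 ≤ (2 * Real.pi)⁻¹)
  have h6 := norm_q c
  set S := ∑ j : Fin n, ‖c j‖ ^ 2
  set G := ∫ ω, ‖gFun n u k ω‖ ^ 2 ∂muI
  have h7 : m * S ≤ m / 2 * S + M₁ ^ 2 / (2 * m) * ((2 * Real.pi)⁻¹ * G) := by
    rw [h6] at hlo ⊢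
    linarith
  have h8 : (2 * m) * (m * S) ≤ (2 * m) * (m / 2 * S + M₁ ^ 2 / (2 * m) * ((2 * Real.pi)⁻¹ * G)) :=
    mul_le_mul_of_nonneg_left h7 (by positivity)
  have h9 : (2 * m) * (m / 2 * S + M₁ ^ 2 / (2 * m) * ((2 * Real.pi)⁻¹ * G)) =
      m ^ 2 * S + M₁ ^ 2 * ((2 * Real.pi)⁻¹ * G) := by field_simp
  rw [h9] at h8
  linarith

lemma count_bound (n : ℕ) (j : ℤ) :
    ((n : ℝ) - ∑ k : Fin n, ∑ l : Fin n, if (l : ℤ) - (k : ℤ) = j then (1 : ℝ) else 0) ≤ |(j : ℝ)| := by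
  have h1 : ∀ k : Fin n, (∑ l : Fin n, if (l : ℤ) - (k : ℤ) = j then (1 : ℝ) else 0) =
      if 0 ≤ (k : ℤ) + j ∧ (k : ℤ) + j < n then 1 else 0 := by
    intro k
    split_ifs with h
    · have : ∀ l : Fin n, ((l : ℤ) - (k : ℤ) = j) ↔ l = ⟨((k : ℤ) + j).toNat, by omega⟩ := by
        intro l
        rw [Fin.ext_iff]
        simp only
        omega
      simp_rw [this]
      simp
    · refine Finset.sum_eq_zero fun l _ => if_neg ?_
      have := l.2
      omega
  simp_rw [h1]
  rw [Finset.sum_boole]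
  have h2 := Finset.card_filter_add_card_filter_not (s := (Finset.univ : Finset (Fin n)))
    (fun k : Fin n => 0 ≤ (k : ℤ) + j ∧ (k : ℤ) + j < n)
  rw [Finset.card_univ, Fintype.card_fin] at h2
  have h3 : (Finset.univ.filter fun k : Fin n => ¬ (0 ≤ (k : ℤ) + j ∧ (k : ℤ) + j < n)).card ≤
      j.natAbs := by
    rcases le_total 0 j with hj | hj
    · calc _ = ((Finset.univ.filter fun k : Fin n =>
          ¬ (0 ≤ (k : ℤ) + j ∧ (k : ℤ) + j < n)).image (fun k : Fin n => (k : ℕ))).card :=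
            (Finset.card_image_of_injective _ Fin.val_injective).symm
        _ ≤ (Finset.Ico (n - j.natAbs) n).card := by
            refine Finset.card_le_card fun x hx => ?_
            simp only [Finset.mem_image, Finset.mem_filter, Finset.mem_univ, true_and] at hx
            obtain ⟨k, hk, rfl⟩ := hx
            have := k.2
            rw [Finset.mem_Ico]
            omega
        _ ≤ _ := by rw [Nat.card_Ico]; omega
    · calc _ = ((Finset.univ.filter fun k : Fin n =>
          ¬ (0 ≤ (k : ℤ) + j ∧ (k : ℤ) + j < n)).image (fun k : Fin n => (k : ℕ))).card :=
            (Finset.card_image_of_injective _ Fin.val_injective).symm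
        _ ≤ (Finset.range j.natAbs).card := by
            refine Finset.card_le_card fun x hx => ?_
            simp only [Finset.mem_image, Finset.mem_filter, Finset.mem_univ, true_and] at hx
            obtain ⟨k, hk, rfl⟩ := hx
            have := k.2
            rw [Finset.mem_range]
            omega
        _ ≤ _ := by rw [Finset.card_range]
  have h4 : |(j : ℝ)| = (j.natAbs : ℝ) := by rw [Nat.cast_natAbs, Int.cast_abs]
  have h2' : ((Finset.univ.filter fun k : Fin n => 0 ≤ (k : ℤ) + j ∧ (k : ℤ) + j < n).card : ℝ) +
    ((Finset.univ.filter fun k : Fin n =>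
      ¬ (0 ≤ (k : ℤ) + j ∧ (k : ℤ) + j < n)).card : ℝ) = n := by exact_mod_cast h2
  rw [h4]
  have h3' : ((Finset.univ.filter fun k : Fin n =>
    ¬ (0 ≤ (k : ℤ) + j ∧ (k : ℤ) + j < n)).card : ℝ) ≤ (j.natAbs : ℝ) := by exact_mod_cast h3
  linarith

lemma sum_tail (n : ℕ) {a : ℤ → ℝ} {S : ℝ} (ha : ∀ j, 0 ≤ a j) (hS : HasSum a S)
    (hs : Summable fun j : ℤ => |(j : ℝ)| * a j) :
    ∑ k : Fin n, (S - ∑ l : Fin n, a ((l : ℤ) - (k : ℤ))) ≤ ∑' j : ℤ, |(j : ℝ)| * a j := by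
  have h1 : HasSum (fun j : ℤ => ∑ k : Fin n,
      (a j - ∑ l : Fin n, if (l : ℤ) - (k : ℤ) = j then a j else 0))
      (∑ k : Fin n, (S - ∑ l : Fin n, a ((l : ℤ) - (k : ℤ)))) := by
    refine hasSum_sum fun k _ => hS.sub (hasSum_sum fun l _ => ?_)
    have := hasSum_ite_eq ((l : ℤ) - (k : ℤ)) (a ((l : ℤ) - (k : ℤ)))
    suffices he : (fun j : ℤ => if (l : ℤ) - (k : ℤ) = j then a j else 0) =
        fun b' => if b' = (l : ℤ) - (k : ℤ) then a ((l : ℤ) - (k : ℤ)) else 0 by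
      rw [he]; exact this
    funext j
    by_cases h : (l : ℤ) - (k : ℤ) = j
    · rw [if_pos h, if_pos h.symm, h]
    · rw [if_neg h, if_neg (fun h' => h h'.symm)]
  refine hasSum_le (fun j => ?_) h1 hs.hasSum
  have h2 := mul_le_mul_of_nonneg_right (count_bound n j) (ha j)
  refine le_trans (le_of_eq ?_) h2
  rw [Finset.sum_sub_distrib, sub_mul, Finset.sum_mul]
  simp only [Finset.sum_mul, ite_mul, one_mul, zero_mul]
  simp

/-- Lemma, part (v): `‖T_n(v)⁻¹T_n(vu) − T_n(u)‖_F² ≤ 4m⁻²M₁²M₂`. -/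
theorem stmt18 (n : ℕ) (hn : 1 ≤ n) (v u : ℝ → ℝ) (M₁ M₂ m : ℝ) (hm : 0 < m)
    (hv1 : IntegrableOn v (Set.Icc (-Real.pi) Real.pi))
    (hv2 : IntegrableOn (fun ω => (v ω) ^ 2) (Set.Icc (-Real.pi) Real.pi))
    (hu1 : IntegrableOn u (Set.Icc (-Real.pi) Real.pi))
    (hu2 : IntegrableOn (fun ω => (u ω) ^ 2) (Set.Icc (-Real.pi) Real.pi))
    (hM1 : ∀ᵐ ω ∂(volume.restrict (Set.Icc (-Real.pi) Real.pi)), |v ω| ≤ M₁)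
    (hlow : ∀ᵐ ω ∂(volume.restrict (Set.Icc (-Real.pi) Real.pi)), m ≤ v ω)
    (hsum : Summable fun j : ℤ => |(j : ℝ)| * ‖fCoef u j‖ ^ 2)
    (hM2 : (∑' j : ℤ, |(j : ℝ)| * ‖fCoef u j‖ ^ 2) ≤ M₂) :
    (∑ j : Fin n, ∑ k : Fin n,
        ‖((Toep n v)⁻¹ * Toep n (fun ω => v ω * u ω) - Toep n u) j k‖ ^ 2) ≤
      4 * (m ^ 2)⁻¹ * M₁ ^ 2 * M₂ := by
  have hunit := Toep_unit (n := n) hm hv1 hlow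
  set D := (Toep n v)⁻¹ * Toep n (fun ω => v ω * u ω) - Toep n u with hD
  have hAD : Toep n v * D = Toep n (fun ω => v ω * u ω) - Toep n v * Toep n u := by
    rw [hD, Matrix.mul_sub, Matrix.mul_nonsing_inv_cancel_left _ _ hunit]
  have hcol : ∀ k : Fin n, m ^ 2 * ∑ j : Fin n, ‖D j k‖ ^ 2 ≤
      M₁ ^ 2 * ((2 * Real.pi)⁻¹ * ∫ ω, (u ω) ^ 2 ∂muI -
        ∑ l : Fin n, ‖fCoef u ((l : ℤ) - (k : ℤ))‖ ^ 2) := by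
    intro k
    rw [← (gFun_int n hu1 hu2 k).2]
    refine column_bound hm hv1 hu1 hu2 hM1 hlow k (fun j => D j k) fun j => ?_
    have := congrFun (congrFun hAD j) k
    simpa [Matrix.mul_apply, Matrix.mulVec, dotProduct, Toep] using this
  have htail := sum_tail n (a := fun j => ‖fCoef u j‖ ^ 2) (fun j => by positivity)
    (parseval hu1 hu2) hsum
  have hM2' : 0 ≤ M₂ := le_trans (tsum_nonneg fun j => by positivity) hM2
  have h1 : m ^ 2 * ∑ j : Fin n, ∑ k : Fin n, ‖D j k‖ ^ 2 ≤ M₁ ^ 2 * M₂ := by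
    rw [Finset.sum_comm, Finset.mul_sum]
    refine (Finset.sum_le_sum fun k _ => hcol k).trans ?_
    rw [← Finset.mul_sum]
    exact mul_le_mul_of_nonneg_left (htail.trans hM2) (by positivity)
  have h2 : 0 ≤ (m ^ 2)⁻¹ * (M₁ ^ 2 * M₂) := by positivity
  calc _ = (m ^ 2)⁻¹ * (m ^ 2 * ∑ j : Fin n, ∑ k : Fin n, ‖D j k‖ ^ 2) := by
        rw [inv_mul_cancel_left₀ (by positivity)]
    _ ≤ (m ^ 2)⁻¹ * (M₁ ^ 2 * M₂) := mul_le_mul_of_nonneg_left h1 (by positivity)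
    _ ≤ 4 * ((m ^ 2)⁻¹ * (M₁ ^ 2 * M₂)) := by linarith
    _ = _ := by ring
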